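/- arXiv:2302.11083 — 2 statements merged into one kernel-verified Lean document; each statement's English description precedes it below -/
import Mathlib

section
/- Let u₁ = (a₁, a₂, 0), u₂ = (b₁, 0, b₂), u₃ = (0, c₁, c₂) be three unit vectors in ℝ³ with all coordinates nonnegative. Then u₁·u₂ + u₁·u₃ + u₂·u₃ ≤ 3/2. -/
/-- For unit vectors u₁=(a₁,a₂,0), u₂=(b₁,0,b₂), u₃=(0,c₁,c₂) in ℝ³ with nonnegative
coordinates, u₁·u₂ + u₁·u₃ + u₂·u₃ ≤ 3/2. -/
theorem stmt3 (a₁ a₂ b₁ b₂ c₁ c₂ : ℝ)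
    (ha₁ : 0 ≤ a₁) (ha₂ : 0 ≤ a₂) (hb₁ : 0 ≤ b₁) (hb₂ : 0 ≤ b₂)
    (hc₁ : 0 ≤ c₁) (hc₂ : 0 ≤ c₂)
    (hu₁ : a₁ ^ 2 + a₂ ^ 2 = 1) (hu₂ : b₁ ^ 2 + b₂ ^ 2 = 1) (hu₃ : c₁ ^ 2 + c₂ ^ 2 = 1) :
    a₁ * b₁ + a₂ * c₁ + b₂ * c₂ ≤ 3 / 2 := by
  linarith [two_mul_le_add_sq a₁ b₁, two_mul_le_add_sq a₂ c₁, two_mul_le_add_sq b₂ c₂]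
end

section
/- Let A = S_A + v_A and B = S_B + v_B be n/2-dimensional balanced affine subspaces of 𝔽₂^{3n/4} with dim(A₀∩B₀) = n/2 − 2 and dim(A₁∩B₁) = n/2 − 2 (so dim(A∩B) = n/2 − 1, viewing intersections of cosets as affine subspaces). Then for any fixed pair (b, s) with the property that s ∉ S_A + v_A when b = 0 (respectively s ∉ S_A^⊥ when b = 1), the probability over a uniformly random such B (given fixed A) that s ∈ S_B + v_B (resp. s ∈ S_B^⊥) is at most 2^{−n/4}. -/
open scoped BigOperators

namespace Stmt10

/-- The 𝔽₂ inner product. -/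
def dotp {ι : Type*} [Fintype ι] (s t : ι → ZMod 2) : ZMod 2 := ∑ i, s i * t i

/-- The dual (orthogonal complement) S^⊥ of a subspace. -/
def perp {ι : Type*} [Fintype ι] (S : Submodule (ZMod 2) (ι → ZMod 2)) :
    Set (ι → ZMod 2) :=
  {t | ∀ x ∈ S, dotp t x = 0}

/-- The coset S + v as a set. -/
def coset {ι : Type*} (S : Submodule (ZMod 2) (ι → ZMod 2)) (v : ι → ZMod 2) :
    Set (ι → ZMod 2) :=
  {x | x - v ∈ S}

/-- The part of the coset S + v whose coordinate i₀ equals b. -/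
def cosetPart {ι : Type*} (S : Submodule (ZMod 2) (ι → ZMod 2)) (v : ι → ZMod 2)
    (i₀ : ι) (b : ZMod 2) : Set (ι → ZMod 2) :=
  {x | x - v ∈ S ∧ x i₀ = b}

/-- B = (S_B, v_B) is related to A = (S_A, v_A): B is a balanced n/2-dimensional affine
subspace of 𝔽₂^{3n/4} with |A₀ ∩ B₀| = |A₁ ∩ B₁| = 2^{n/2−2}. -/
def Rel (n m : ℕ) [NeZero m] (SA : Submodule (ZMod 2) (Fin m → ZMod 2))
    (vA : Fin m → ZMod 2) (B : Submodule (ZMod 2) (Fin m → ZMod 2) × (Fin m → ZMod 2)) :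
    Prop :=
  Module.finrank (ZMod 2) B.1 = n / 2 ∧
  Nat.card (cosetPart B.1 B.2 0 0) * 2 = Nat.card (coset B.1 B.2) ∧
  Nat.card ↥(cosetPart SA vA 0 0 ∩ cosetPart B.1 B.2 0 0) = 2 ^ (n / 2 - 2) ∧
  Nat.card ↥(cosetPart SA vA 0 1 ∩ cosetPart B.1 B.2 0 1) = 2 ^ (n / 2 - 2)

lemma eq_one_of_ne_zero : ∀ c : ZMod 2, c ≠ 0 → c = 1 := by decide

/-- If adding one to `g` is realised by a permutation of `X`, then each fibre of the
`𝔽₂`-valued function `g` is half of `X`. -/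
lemma card_fibre_mul_two {X : Type*} [Finite X] (g : X → ZMod 2) (e : Equiv.Perm X)
    (he : ∀ x, g (e x) = g x + 1) (b : ZMod 2) :
    Nat.card {x // g x = b} * 2 = Nat.card X := by
  classical
  have hflip : ∀ c d : ZMod 2, ¬ c = d ↔ c + 1 = d := by decide
  have hcompl : Nat.card {x // ¬ g x = b} = Nat.card {x // g x = b} :=
    Nat.card_congr (e.subtypeEquiv fun x => by rw [he, hflip])
  have hsum : Nat.card X = Nat.card {x // g x = b} + Nat.card {x // ¬ g x = b} := by
    rw [← Nat.card_sum]
    exact Nat.card_congr (Equiv.sumCompl fun x => g x = b).symm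
  omega

/-- Double counting: if every `t ∈ N` admits an injection carrying the elements of `G`
related to `s` to elements of `G` related to `t`, and every element of `G` is related to at most
`c` elements of `N`, then few elements of `G` are related to `s`. -/
lemma card_related_mul_card_le {X Y : Type*} [Finite X] [Finite Y] (G : X → Prop)
    (P : X → Y → Prop) (s : Y) (N : Y → Prop) (c : ℕ) (φ : Y → X → X)
    (hinj : ∀ t, N t → Function.Injective (φ t))
    (hφ : ∀ t, N t → ∀ B, G B → P B s → G (φ t B) ∧ P (φ t B) t)
    (hc : ∀ B, G B → Nat.card {t // N t ∧ P B t} ≤ c) :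
    Nat.card {B // G B ∧ P B s} * Nat.card {t // N t} ≤ Nat.card {B // G B} * c := by
  classical
  have := Fintype.ofFinite X
  have := Fintype.ofFinite Y
  simp only [Nat.card_eq_fintype_card, Fintype.card_subtype] at hc ⊢
  have hdouble := Finset.sum_card_bipartiteAbove_eq_sum_card_bipartiteBelow
    (s := Finset.univ.filter G) (t := Finset.univ.filter N) P
  have hlow : (Finset.univ.filter N).card * (Finset.univ.filter fun B => G B ∧ P B s).card ≤
      ∑ t ∈ Finset.univ.filter N, ((Finset.univ.filter G).bipartiteBelow P t).card := by
    rw [← smul_eq_mul]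
    refine Finset.card_nsmul_le_sum _ _ _ fun t ht => ?_
    have hNt : N t := (Finset.mem_filter.1 ht).2
    refine Finset.card_le_card_of_injOn (φ t) (fun B hB => ?_) (hinj t hNt).injOn
    have hB := (Finset.mem_filter.1 hB).2
    simpa [Finset.bipartiteBelow] using hφ t hNt B hB.1 hB.2
  have hup : ∑ B ∈ Finset.univ.filter G, ((Finset.univ.filter N).bipartiteAbove P B).card ≤
      (Finset.univ.filter G).card * c := by
    rw [← smul_eq_mul]
    refine Finset.sum_le_card_nsmul _ _ _ fun B hB => ?_
    rw [Finset.bipartiteAbove, Finset.filter_filter]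
    exact hc B (Finset.mem_filter.1 hB).2
  rw [mul_comm]
  exact hlow.trans (hdouble ▸ hup)

section Transvection

variable {V : Type*} [AddCommGroup V] [Module (ZMod 2) V]

/-- The transvection `x ↦ x + f x • w`, where `f w = 0`. -/
def transvec (f : V →ₗ[ZMod 2] ZMod 2) (w : V) (hw : f w = 0) : V ≃ₗ[ZMod 2] V :=
  LinearEquiv.ofInvolutive (LinearMap.id + f.smulRight w) fun x => by
    have h2 : f x • w + f x • w = 0 := by rw [← add_smul, CharTwo.add_self_eq_zero, zero_smul]
    simp [hw, add_assoc, h2]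

lemma transvec_apply (f : V →ₗ[ZMod 2] ZMod 2) (w : V) (hw : f w = 0) (x : V) :
    transvec f w hw x = x + f x • w := rfl

/-- The level set of a nonzero functional is half of the space. -/
lemma card_level_mul_two [Finite V] (f : V →ₗ[ZMod 2] ZMod 2) (u : V) (hu : f u = 1) (a : V) :
    Nat.card {x // f (x - a) = 1} * 2 = Nat.card V :=
  card_fibre_mul_two (fun x => f (x - a)) (Equiv.addRight u)
    (fun x => by simp [hu, add_sub_right_comm]) 1

/-- The action on pairs `(S, v)`, representing `S + v`, of a linear automorphism recentred at
`a`. -/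
def moveCoset (φ : V ≃ₗ[ZMod 2] V) (a : V) (B : Submodule (ZMod 2) V × V) :
    Submodule (ZMod 2) V × V :=
  (B.1.map (φ : V →ₗ[ZMod 2] V), φ (B.2 - a) + a)

lemma moveCoset_injective (φ : V ≃ₗ[ZMod 2] V) (a : V) :
    Function.Injective (moveCoset φ a) := by
  rintro ⟨S, v⟩ ⟨S', v'⟩ h
  simp only [moveCoset, Prod.mk.injEq, add_left_inj, EmbeddingLike.apply_eq_iff_eq,
    sub_left_inj] at h
  exact Prod.ext (Submodule.map_injective_of_injective φ.injective h.1) h.2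

end Transvection

section Coset

variable {m : ℕ} {S SA : Submodule (ZMod 2) (Fin m → ZMod 2)} {v vA a x : Fin m → ZMod 2}

lemma mem_coset_moveCoset (φ : (Fin m → ZMod 2) ≃ₗ[ZMod 2] (Fin m → ZMod 2)) :
    φ (x - a) + a ∈ coset (moveCoset φ a (S, v)).1 (moveCoset φ a (S, v)).2 ↔
      x ∈ coset S v := by
  have h : φ (x - a) + a - (φ (v - a) + a) = φ (x - v) := by
    rw [add_sub_add_right_eq_sub, ← map_sub, sub_sub_sub_cancel_right]
  change φ (x - a) + a - (φ (v - a) + a) ∈ S.map φ.toLinearMap ↔ x - v ∈ S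
  rw [h]
  exact φ.injective.mem_set_image (s := (S : Set (Fin m → ZMod 2)))

lemma card_coset : Nat.card (coset S v) = 2 ^ Module.finrank (ZMod 2) S := by
  have h : Nat.card (coset S v) = Nat.card S :=
    Nat.card_congr ((Equiv.subRight v).subtypeEquiv fun x => Iff.rfl)
  rw [h, Module.natCard_eq_pow_finrank (K := ZMod 2), Nat.card_zmod]

/-- A coset on which the coordinate `i` takes both values is balanced. -/
lemma card_cosetPart_mul_two (i : Fin m) (h₀ : (cosetPart S v i 0).Nonempty)
    (h₁ : (cosetPart S v i 1).Nonempty) :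
    Nat.card (cosetPart S v i 0) * 2 = Nat.card (coset S v) := by
  obtain ⟨x, hx, hx0⟩ := h₀
  obtain ⟨y, hy, hy1⟩ := h₁
  have hu : y - x ∈ S := by simpa using S.sub_mem hy hx
  rw [← card_fibre_mul_two (fun z : coset S v => z.1 i)
    ((Equiv.addRight (y - x)).subtypeEquiv fun z => ?_) (fun z => ?_) 0]
  · congr 1
    exact Nat.card_congr (Equiv.subtypeSubtypeEquivSubtypeInter (· ∈ coset S v) (· i = 0)).symm
  · change z - v ∈ S ↔ z + (y - x) - v ∈ S
    rw [add_sub_right_comm, S.add_mem_iff_left hu]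
  · simp [hx0, hy1]

lemma card_perp_mul : Nat.card (perp S) * 2 ^ Module.finrank (ZMod 2) S = 2 ^ m := by
  have h : Nat.card (perp S) = Nat.card S.dualAnnihilator := by
    refine Nat.card_congr ((dotProductEquiv (ZMod 2) (Fin m)).toEquiv.subtypeEquiv fun t => ?_)
    rw [Submodule.mem_dualAnnihilator]
    rfl
  have hdim := Subspace.finrank_add_finrank_dualAnnihilator_eq S
  rw [Module.finrank_fin_fun] at hdim
  rw [h, Module.natCard_eq_pow_finrank (K := ZMod 2), Nat.card_zmod, ← pow_add, add_comm, hdim]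

variable {n : ℕ} [NeZero m] {B : Submodule (ZMod 2) (Fin m → ZMod 2) × (Fin m → ZMod 2)}

lemma Rel.nonempty_inter_zero (h : Rel n m SA vA B) :
    (cosetPart SA vA 0 0 ∩ cosetPart B.1 B.2 0 0).Nonempty := by
  by_contra he
  have := h.2.2.1
  rw [Set.not_nonempty_iff_eq_empty.1 he] at this
  rw [Nat.card_of_isEmpty] at this
  exact (Nat.two_pow_pos _).ne this

lemma Rel.nonempty_inter_one (h : Rel n m SA vA B) :
    (cosetPart SA vA 0 1 ∩ cosetPart B.1 B.2 0 1).Nonempty := by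
  by_contra he
  have := h.2.2.2
  rw [Set.not_nonempty_iff_eq_empty.1 he] at this
  rw [Nat.card_of_isEmpty] at this
  exact (Nat.two_pow_pos _).ne this

/-- The directions of related cosets share a vector whose first coordinate is `1`. -/
lemma Rel.exists_common_direction (h : Rel n m SA vA B) : ∃ y ∈ SA, y ∈ B.1 ∧ y 0 = 1 := by
  obtain ⟨x, ⟨hxA, hx0⟩, hxB, -⟩ := h.nonempty_inter_zero
  obtain ⟨y, ⟨hyA, hy1⟩, hyB, -⟩ := h.nonempty_inter_one
  exact ⟨y - x, by simpa using SA.sub_mem hyA hxA, by simpa using B.1.sub_mem hyB hxB,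
    by simp [hx0, hy1]⟩

/-- `Rel` is invariant under automorphisms centred at `vA` that preserve both halves of
`SA + vA`. -/
lemma Rel.moveCoset (h : Rel n m SA vA B)
    (φ : (Fin m → ZMod 2) ≃ₗ[ZMod 2] (Fin m → ZMod 2)) (hφ : ∀ x, φ x ∈ SA ↔ x ∈ SA)
    (hφ0 : ∀ x ∈ SA, φ x 0 = x 0) : Rel n m SA vA (moveCoset φ vA B) := by
  obtain ⟨S, v⟩ := B
  set B' := Stmt10.moveCoset φ vA (S, v)
  have hmem : ∀ (b : ZMod 2) (x : Fin m → ZMod 2),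
      x ∈ cosetPart SA vA 0 b ∩ cosetPart S v 0 b ↔
        φ (x - vA) + vA ∈ cosetPart SA vA 0 b ∩ cosetPart B'.1 B'.2 0 b := by
    intro b x
    have hB : φ (x - vA) + vA - B'.2 ∈ B'.1 ↔ x - v ∈ S := mem_coset_moveCoset φ
    simp only [cosetPart, Set.mem_inter_iff, Set.mem_ofPred_eq, hB, add_sub_cancel_right, hφ]
    by_cases hx : x - vA ∈ SA
    · simp only [Pi.add_apply, hφ0 _ hx, Pi.sub_apply, sub_add_cancel]
    · simp [hx]
  have hcard : ∀ b : ZMod 2, Nat.card ↥(cosetPart SA vA 0 b ∩ cosetPart B'.1 B'.2 0 b) =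
      Nat.card ↥(cosetPart SA vA 0 b ∩ cosetPart S v 0 b) := fun b =>
    (Nat.card_congr ((((Equiv.subRight vA).trans φ.toEquiv).trans
      (Equiv.addRight vA)).subtypeEquiv fun x => hmem b x)).symm
  obtain ⟨x, hx⟩ := h.nonempty_inter_zero
  obtain ⟨y, hy⟩ := h.nonempty_inter_one
  refine ⟨?_, ?_, ?_, ?_⟩
  · rw [← h.1]
    exact LinearEquiv.finrank_map_eq φ S
  · exact card_cosetPart_mul_two 0 ⟨_, ((hmem 0 x).1 hx).2⟩ ⟨_, ((hmem 1 y).1 hy).2⟩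
  · rw [hcard, h.2.2.1]
  · rw [hcard, h.2.2.2]

/-- Related cosets meet in at least half of their size. -/
lemma Rel.le_card_inter (hn : 4 ≤ n) (h : Rel n m SA vA B) :
    2 ^ (n / 2 - 1) ≤ Nat.card ↥(coset SA vA ∩ coset B.1 B.2) := by
  have h0 := h.2.2.1
  have h1 := h.2.2.2
  rw [Nat.card_coe_set_eq] at h0 h1 ⊢
  have hdisj : Disjoint (cosetPart SA vA 0 0 ∩ cosetPart B.1 B.2 0 0)
      (cosetPart SA vA 0 1 ∩ cosetPart B.1 B.2 0 1) :=
    Set.disjoint_left.2 fun x hx hx' => zero_ne_one (hx.1.2.symm.trans hx'.1.2)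
  have hpow : 2 ^ (n / 2 - 1) = 2 ^ (n / 2 - 2) + 2 ^ (n / 2 - 2) := by
    rw [← mul_two, ← pow_succ]
    congr 1
    omega
  rw [hpow]
  nth_rewrite 1 [← h0]
  rw [← h1, ← Set.ncard_union_eq hdisj]
  refine Set.ncard_le_ncard ?_
  rintro x (hx | hx) <;> exact ⟨hx.1.1, hx.2.1⟩

/-- At most half of a related coset lies off `SA + vA` in the sense of a functional vanishing on
`SA`. -/
lemma Rel.card_level_inter_le (hn : 4 ≤ n) (h : Rel n m SA vA B)
    (f : (Fin m → ZMod 2) →ₗ[ZMod 2] ZMod 2) (hf : ∀ x ∈ SA, f x = 0) :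
    Nat.card {t // f (t - vA) = 1 ∧ t ∈ coset B.1 B.2} ≤ 2 ^ (n / 2 - 1) := by
  have hA := h.le_card_inter hn
  have hB : Nat.card (coset B.1 B.2) = 2 ^ (n / 2) := by rw [card_coset, h.1]
  have hpow : 2 ^ (n / 2) = 2 ^ (n / 2 - 1) + 2 ^ (n / 2 - 1) := by
    rw [← mul_two, ← pow_succ]
    congr 1
    omega
  change Nat.card ↥{t | f (t - vA) = 1 ∧ t ∈ coset B.1 B.2} ≤ _
  rw [Nat.card_coe_set_eq] at hA hB ⊢
  have hdisj : Disjoint {t | f (t - vA) = 1 ∧ t ∈ coset B.1 B.2}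
      (coset SA vA ∩ coset B.1 B.2) :=
    Set.disjoint_left.2 fun x hx hx' => zero_ne_one ((hf _ hx'.1).symm.trans hx.1)
  have hle : ({t | f (t - vA) = 1 ∧ t ∈ coset B.1 B.2} ∪
      (coset SA vA ∩ coset B.1 B.2)).ncard ≤ (coset B.1 B.2).ncard :=
    Set.ncard_le_ncard (Set.union_subset (fun x hx => hx.2) fun x hx => hx.2)
  rw [Set.ncard_union_eq hdisj] at hle
  omega

end Coset

section Bounds

variable {n m : ℕ} [NeZero m] {SA : Submodule (ZMod 2) (Fin m → ZMod 2)}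
  {vA s : Fin m → ZMod 2}

lemma card_rel_mem_coset_mul_le (hm : 4 * m = 3 * n) (h4 : 4 ∣ n) (hn : 8 ≤ n)
    (hs : s ∉ coset SA vA) :
    Nat.card {B // Rel n m SA vA B ∧ s ∈ coset B.1 B.2} * 2 ^ (n / 4) ≤
      Nat.card {B // Rel n m SA vA B} := by
  classical
  obtain ⟨f, hfs, hfSA⟩ := Submodule.exists_le_ker_of_notMem hs
  have hf : ∀ x ∈ SA, f x = 0 := fun x hx => hfSA hx
  have hfs : f (s - vA) = 1 := eq_one_of_ne_zero _ hfs
  have hcenter : ∀ t, f (t - vA) = 1 → f (t - s) = 0 := fun t ht => by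
    rw [← sub_sub_sub_cancel_right t s vA, map_sub, ht, hfs, sub_self]
  have hcount := card_related_mul_card_le (Rel n m SA vA) (fun B t => t ∈ coset B.1 B.2) s
    (fun t => f (t - vA) = 1) (2 ^ (n / 2 - 1))
    (fun t B => if ht : f (t - vA) = 1 then
      moveCoset (transvec f (t - s) (hcenter t ht)) vA B else B)
    (fun t ht => by simpa only [ht, dite_true] using moveCoset_injective _ _)
    (fun t ht B hB hsB => ?_)
    (fun B hB => hB.card_level_inter_le (by omega) f hf)
  · have hlevel := card_level_mul_two f _ hfs vA
    rw [Module.natCard_eq_pow_finrank (K := ZMod 2) (V := Fin m → ZMod 2), Nat.card_zmod,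
      Module.finrank_fin_fun] at hlevel
    have hpow : 2 ^ m = 2 ^ (n / 4) * 2 ^ (n / 2 - 1) * 2 := by
      rw [← pow_add, ← pow_succ]
      congr 1
      omega
    have hlevel' : Nat.card {t // f (t - vA) = 1} = 2 ^ (n / 4) * 2 ^ (n / 2 - 1) := by omega
    rw [hlevel', ← mul_assoc] at hcount
    exact Nat.le_of_mul_le_mul_right hcount (by positivity)
  · simp only [ht, dite_true]
    refine ⟨hB.moveCoset _ (fun x => ?_) (fun x hx => ?_), ?_⟩
    · refine ⟨fun hx => ?_, fun hx => by simpa [transvec_apply, hf x hx] using hx⟩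
      have hfx : f x = 0 := by
        have := hf _ hx
        simpa [transvec_apply, hcenter t ht] using this
      simpa [transvec_apply, hfx] using hx
    · simp [transvec_apply, hf x hx]
    · have hst := (mem_coset_moveCoset (a := vA) (transvec f (t - s) (hcenter t ht))).2 hsB
      simpa [transvec_apply, hfs] using hst

lemma card_rel_mem_perp_mul_le (hm : 4 * m = 3 * n) (h4 : 4 ∣ n) (hn : 8 ≤ n)
    (hs : s ∉ perp SA) :
    Nat.card {B // Rel n m SA vA B ∧ s ∈ perp B.1} * 2 ^ (n / 4) ≤
      Nat.card {B // Rel n m SA vA B} := by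
  classical
  rcases isEmpty_or_nonempty {B // Rel n m SA vA B ∧ s ∈ perp B.1} with he | ⟨B₀, hB₀, hsB₀⟩
  · simp
  obtain ⟨y, hyA, hyB, hy0⟩ := hB₀.exists_common_direction
  obtain ⟨w, hwA, hw0, hsw⟩ : ∃ w ∈ SA, w 0 = 0 ∧ s ⬝ᵥ w = 1 := by
    obtain ⟨z, hzA, hz⟩ : ∃ z ∈ SA, s ⬝ᵥ z ≠ 0 := by
      by_contra! hall
      exact hs hall
    have hz : s ⬝ᵥ z = 1 := eq_one_of_ne_zero _ hz
    have hsy : s ⬝ᵥ y = 0 := hsB₀ y hyB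
    by_cases hz0 : z 0 = 0
    · exact ⟨z, hzA, hz0, hz⟩
    · refine ⟨z - y, SA.sub_mem hzA hyA, ?_, by rw [dotProduct_sub, hz, hsy, sub_zero]⟩
      rw [Pi.sub_apply, hy0, eq_one_of_ne_zero _ hz0, sub_self]
  let pair := dotProductEquiv (ZMod 2) (Fin m)
  have hpair : ∀ t x, pair t x = t ⬝ᵥ x := fun t x => rfl
  have hcenter : ∀ t, t ⬝ᵥ w = 1 → pair (t - s) w = 0 := fun t ht => by
    rw [hpair, sub_dotProduct, ht, hsw, sub_self]
  have hcount := card_related_mul_card_le (Rel n m SA vA) (fun B t => t ∈ perp B.1) s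
    (fun t => t ⬝ᵥ w = 1) (2 ^ (n / 4))
    (fun t B => if ht : t ⬝ᵥ w = 1 then
      moveCoset (transvec (pair (t - s)) w (hcenter t ht)) vA B else B)
    (fun t ht => by simpa only [ht, dite_true] using moveCoset_injective _ _)
    (fun t ht B hB hsB => ?_) (fun B hB => ?_)
  · have hlevel := card_level_mul_two (pair w) s (by rw [hpair, dotProduct_comm, hsw]) 0
    rw [Module.natCard_eq_pow_finrank (K := ZMod 2) (V := Fin m → ZMod 2), Nat.card_zmod,
      Module.finrank_fin_fun] at hlevel
    simp only [sub_zero, hpair, dotProduct_comm w] at hlevel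
    have hpow : 2 ^ m = 2 ^ (n / 4) * 2 ^ (n / 2 - 1) * 2 := by
      rw [← pow_add, ← pow_succ]
      congr 1
      omega
    have hlevel' : Nat.card {t // t ⬝ᵥ w = 1} = 2 ^ (n / 4) * 2 ^ (n / 2 - 1) := by omega
    rw [hlevel', ← mul_assoc] at hcount
    have hle : 2 ^ (n / 4) ≤ 2 ^ (n / 2 - 1) := Nat.pow_le_pow_right two_pos (by omega)
    exact Nat.le_of_mul_le_mul_right (hcount.trans (Nat.mul_le_mul_left _ hle)) (by positivity)
  · simp only [ht, dite_true]
    refine ⟨hB.moveCoset _ (fun x => ?_) (fun x hx => ?_), ?_⟩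
    · rw [transvec_apply, SA.add_mem_iff_left (SA.smul_mem _ hwA)]
    · simp [transvec_apply, hw0]
    · rintro _ ⟨x, hx, rfl⟩
      have hsx : s ⬝ᵥ x = 0 := hsB x hx
      change t ⬝ᵥ (x + ((t - s) ⬝ᵥ x) • w) = 0
      rw [dotProduct_add, dotProduct_smul, ht, sub_dotProduct, hsx, sub_zero, smul_eq_mul,
        mul_one, CharTwo.add_self_eq_zero]
  · have hperp := card_perp_mul (S := B.1)
    have hpow : 2 ^ m = 2 ^ (n / 4) * 2 ^ (n / 2) := by
      rw [← pow_add]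
      congr 1
      omega
    rw [hB.1, hpow] at hperp
    rw [← Nat.eq_of_mul_eq_mul_right (by positivity) hperp]
    exact Nat.card_mono (Set.toFinite _) fun t ht => ht.2

end Bounds

/-- For fixed balanced n/2-dimensional A = S_A + v_A in 𝔽₂^{3n/4} (ambient dimension
m = 3n/4) and fixed (b, s) with s ∉ A (if b = false) resp. s ∉ S_A^⊥ (if b = true):
among uniformly random B related to A, the probability that s ∈ B (resp. s ∈ S_B^⊥)
is at most 2^{−n/4}. -/
theorem stmt10 (n m : ℕ) [NeZero m] (hm : 4 * m = 3 * n) (h4 : 4 ∣ n) (hn : 8 ≤ n)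
    (SA : Submodule (ZMod 2) (Fin m → ZMod 2)) (vA : Fin m → ZMod 2)
    (hSA : Module.finrank (ZMod 2) SA = n / 2)
    (hAbal : Nat.card (cosetPart SA vA 0 0) * 2 = Nat.card (coset SA vA))
    (b : Bool) (s : Fin m → ZMod 2)
    (hs : if b then s ∉ perp SA else s ∉ coset SA vA) :
    Nat.card {B : Submodule (ZMod 2) (Fin m → ZMod 2) × (Fin m → ZMod 2) //
        Rel n m SA vA B ∧ (if b then s ∈ perp B.1 else s ∈ coset B.1 B.2)} * 2 ^ (n / 4)
      ≤ Nat.card {B : Submodule (ZMod 2) (Fin m → ZMod 2) × (Fin m → ZMod 2) //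
        Rel n m SA vA B} := by
  cases b with
  | false => simpa using card_rel_mem_coset_mul_le hm h4 hn (by simpa using hs)
  | true => simpa using card_rel_mem_perp_mul_le hm h4 hn (by simpa using hs)

end Stmt10
end
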